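/- Let n ≥ N(Y), let b ∈ ℕ with b ≥ s + 2, and let j ∈ H_{20}. Then there exists α ∈ [0,1] such that the function τ_j(x) = α·∫_{x_j−π}^{x} t_{j+10}(u) du + (1−α)·∫_{x_j−π}^{x} t_{j−10}(u) du satisfies τ_j(x_j + π) = π. -/

import Mathlib

open Real Set MeasureTheory

noncomputable def trigPi (s : ℕ) (y : ℤ → ℝ) (x : ℝ) : ℝ :=
  ∏ i ∈ Finset.range (2 * s), Real.sin ((x - y ((i : ℤ) + 1)) / 2)

noncomputable def xnode (n : ℕ) (j : ℤ) : ℝ := -(j : ℝ) * (Real.pi / n)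

noncomputable def jIdx (y : ℤ → ℝ) (n : ℕ) (i : ℤ) : ℤ := ⌈-(y i) * n / Real.pi⌉

noncomputable def Oint (y : ℤ → ℝ) (n m : ℕ) (i : ℤ) : Set ℝ :=
  Set.Ioo (xnode n (jIdx y n i + m + 1)) (xnode n (jIdx y n i - m))

noncomputable def Oall (y : ℤ → ℝ) (n m : ℕ) : Set ℝ := ⋃ i : ℤ, Oint y n m i

def memH (y : ℤ → ℝ) (n m : ℕ) (j : ℤ) : Prop := xnode n j ∉ Oall y n m

noncomputable def Gam (n : ℕ) (j : ℤ) (x : ℝ) : ℝ :=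
  min 1 (1 / (n * |Real.sin ((x - (xnode n j + Real.pi / n / 2)) / 2)|))

noncomputable def Jker (n b : ℕ) (j : ℤ) (x : ℝ) : ℝ :=
  (Real.sin (n * (x - xnode n j) / 2) / Real.sin ((x - xnode n j) / 2)) ^ (2 * b) +
    (Real.sin (n * (x - xnode n (j - 1)) / 2) / Real.sin ((x - xnode n (j - 1)) / 2)) ^ (2 * b)

noncomputable def tfun (s : ℕ) (y : ℤ → ℝ) (n b : ℕ) (j : ℤ) (x : ℝ) : ℝ :=
  (∫ u in (xnode n j - Real.pi)..x, Jker n b j u * trigPi s y u) /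
    (∫ u in (xnode n j - Real.pi)..(xnode n j + Real.pi), Jker n b j u * trigPi s y u)

noncomputable def chiFun (n : ℕ) (j : ℤ) (x : ℝ) : ℝ := if x ≤ xnode n j then 0 else 1

def IsTrigPoly (m : ℕ) (P : ℝ → ℝ) : Prop :=
  ∃ a b : ℕ → ℝ, ∀ x : ℝ,
    P x = a 0 + ∑ k ∈ Finset.Icc 1 m, (a k * Real.cos (k * x) + b k * Real.sin (k * x))

noncomputable def omegaMod (k : ℕ) (f : ℝ → ℝ) (t : ℝ) : ℝ :=
  sSup {v : ℝ | ∃ δ x : ℝ, 0 < δ ∧ δ ≤ t ∧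
    v = |∑ i ∈ Finset.range (k + 1), (-1 : ℝ) ^ (k - i) * (k.choose i : ℝ) * f (x + i * δ)|}

noncomputable def taufun (s : ℕ) (y : ℤ → ℝ) (n b : ℕ) (j : ℤ) (α : ℝ) (x : ℝ) : ℝ :=
  α * (∫ u in (xnode n j - Real.pi)..x, tfun s y n b (j + 10) u) +
    (1 - α) * (∫ u in (xnode n j - Real.pi)..x, tfun s y n b (j - 10) u)

noncomputable def PsiCap (a ht hh x : ℝ) : ℝ :=
  max (x - a) 0 ^ 3 + 3 * ht * max (x - a) 0 ^ 2 + hh * max (x - a) 0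

noncomputable def qPoly (dj h x : ℝ) : ℝ :=
  x ^ 4 / (8 * Real.pi) + ((Real.pi - dj) / (2 * Real.pi)) * x ^ 3 +
    ((5 * dj ^ 2 - 6 * dj * Real.pi - h ^ 2) / (4 * Real.pi)) * x ^ 2 +
    ((Real.pi - dj) * (5 * dj ^ 2 - 2 * Real.pi ^ 2 - h ^ 2) / (2 * Real.pi)) * x

/-- Integrating the primitive of a `2π`-periodic function over a period. -/
theorem integral_primitive_of_periodic {f : ℝ → ℝ} (hf : Measurable f)
    (hp : Function.Periodic f (2 * π))
    (hi : ∀ a b, IntervalIntegrable f volume a b) {Z : Set ℝ} (hZ : Z.Countable)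
    (hc : ∀ x ∉ Z, ContinuousAt f x) (c a : ℝ) :
    ∫ x in (a - π)..(a + π), (∫ u in (c - π)..x, f u) =
      (π + a - c) * (∫ u in (c - π)..(c + π), f u)
        - ∫ v in (-π)..π, v * f (c + v) := by
  set F : ℝ → ℝ := fun x => ∫ u in (c - π)..x, f u with hF
  have hFc : Continuous F := intervalIntegral.continuous_primitive hi _
  set D := ∫ u in (c - π)..(c + π), f u with hD
  have hshift : ∀ x, F (x + 2 * π) = F x + D := by
    intro x
    have h1 : F x + ∫ u in x..(x + 2 * π), f u = F (x + 2 * π) :=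
      intervalIntegral.integral_add_adjacent_intervals (hi _ _) (hi _ _)
    have h2 := hp.intervalIntegral_add_eq x (c - π)
    rw [show c - π + 2 * π = c + π by ring] at h2
    rw [← h1, h2]
  have hparts : ∫ x in (c - π)..(c + π), (F x + (x - c) * f x) = π * D := by
    have hFi : IntervalIntegrable (fun x => F x + (x - c) * f x) volume (c - π) (c + π) :=
      (hFc.intervalIntegrable _ _).add
        ((hi _ _).continuousOn_mul (by fun_prop))
    rw [integral_eq_of_hasDerivAt_off_countable (fun x => (x - c) * F x) _ hZ
      (by fun_prop) ?_ hFi]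
    · have h0 : F (c - π) = 0 := intervalIntegral.integral_same
      have h1 : F (c + π) = D := rfl
      simp only [h0, h1]; ring
    · intro x hx
      have hd : HasDerivAt F (f x) x :=
        intervalIntegral.integral_hasDerivAt_right (hi _ _)
          (hf.stronglyMeasurable.stronglyMeasurableAtFilter) (hc x hx.2)
      have := ((hasDerivAt_id' x).sub_const c).fun_mul hd
      simpa using this
  rw [intervalIntegral.integral_add (hFc.intervalIntegrable _ _)
    ((hi _ _).continuousOn_mul (by fun_prop))] at hparts
  have htr : ∫ x in (c - π)..(c + π), (x - c) * f x = ∫ v in (-π)..π, v * f (c + v) := by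
    have := intervalIntegral.integral_comp_add_left (a := -π) (b := π)
      (fun x => (x - c) * f x) c
    rw [show c - π = c + -π by ring, ← this]
    simp
  have hmove : ∫ x in (c + π)..(a + π), F x = (∫ x in (c - π)..(a - π), F x) + (a - c) * D := by
    have := intervalIntegral.integral_comp_add_right (a := c - π) (b := a - π) F (2 * π)
    rw [show c - π + 2 * π = c + π by ring, show a - π + 2 * π = a + π by ring] at this
    rw [← this]
    simp only [hshift]
    rw [intervalIntegral.integral_add (hFc.intervalIntegrable _ _) (by simp)]
    simp
  have hF' : ∀ p q, IntervalIntegrable F volume p q := fun p q => hFc.intervalIntegrable p q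
  have e1 := intervalIntegral.integral_add_adjacent_intervals
    (hF' (c - π) (c + π)) (hF' (c + π) (a + π))
  have e2 := intervalIntegral.integral_add_adjacent_intervals
    (hF' (c - π) (a - π)) (hF' (a - π) (a + π))
  rw [htr] at hparts
  linarith

/-- The normalized ratio `sin (n v / 2) / (n sin (v / 2))`. -/
noncomputable def sinRatio (n : ℕ) (v : ℝ) : ℝ := sin (n * v / 2) / (n * sin (v / 2))

theorem abs_sin_nat_mul_le (n : ℕ) (x : ℝ) : |sin (n * x)| ≤ n * |sin x| := by
  induction n with
  | zero => simp
  | succ k ih =>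
    have h : sin ((k + 1 : ℕ) * x) = sin (k * x) * cos x + cos (k * x) * sin x := by
      rw [← sin_add]; push_cast; ring_nf
    rw [h]
    calc _ ≤ |sin (k * x) * cos x| + |cos (k * x) * sin x| := abs_add_le _ _
      _ ≤ |sin (k * x)| * 1 + 1 * |sin x| := by
        rw [abs_mul, abs_mul]
        gcongr
        · exact abs_cos_le_one x
        · exact abs_cos_le_one _
      _ ≤ _ := by push_cast; linarith

theorem abs_sinRatio_le_one (n : ℕ) (v : ℝ) : |sinRatio n v| ≤ 1 := by
  unfold sinRatio
  rw [abs_div, abs_mul, Nat.abs_cast]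
  apply div_le_one_of_le₀ _ (by positivity)
  have := abs_sin_nat_mul_le n (v / 2)
  rwa [← mul_div_assoc] at this

theorem measurable_sinRatio (n : ℕ) : Measurable (sinRatio n) := by
  unfold sinRatio
  fun_prop

theorem sinRatio_neg (n : ℕ) (v : ℝ) : sinRatio n (-v) = sinRatio n v := by
  unfold sinRatio
  rw [mul_neg, neg_div, neg_div, sin_neg, sin_neg, mul_neg, neg_div_neg_eq]

/-- The normalized kernel `n ^ (-2b) J`, translated to the origin. -/
noncomputable def unitKernel (n b : ℕ) (v : ℝ) : ℝ :=
  sinRatio n v ^ (2 * b) + sinRatio n (v - π / n) ^ (2 * b)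

theorem measurable_unitKernel (n b : ℕ) : Measurable (unitKernel n b) := by
  have := measurable_sinRatio n
  unfold unitKernel
  fun_prop

theorem unitKernel_nonneg (n b : ℕ) (v : ℝ) : 0 ≤ unitKernel n b v := by
  unfold unitKernel
  have h : Even (2 * b) := even_two_mul b
  exact add_nonneg (h.pow_nonneg _) (h.pow_nonneg _)

theorem unitKernel_le_two (n b : ℕ) (v : ℝ) : unitKernel n b v ≤ 2 := by
  unfold unitKernel
  have h (w : ℝ) : sinRatio n w ^ (2 * b) ≤ 1 := by
    rw [← (even_two_mul b).pow_abs]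
    exact pow_le_one₀ (abs_nonneg _) (abs_sinRatio_le_one n w)
  linarith [h v, h (v - π / n)]

theorem intervalIntegrable_unitKernel (n b : ℕ) (p q : ℝ) :
    IntervalIntegrable (unitKernel n b) volume p q := by
  rw [intervalIntegrable_iff]
  refine Measure.integrableOn_of_bounded (M := 2) (by simp)
    (measurable_unitKernel n b).aestronglyMeasurable (ae_of_all _ fun v => ?_)
  rw [norm_eq_abs, abs_of_nonneg (unitKernel_nonneg n b v)]
  exact unitKernel_le_two n b v

theorem two_div_pi_le_sinRatio {n : ℕ} (hn : 0 < n) {v : ℝ} (h0 : 0 < v) (h1 : v ≤ π / n) :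
    2 / π ≤ sinRatio n v := by
  have hn' : (1 : ℝ) ≤ n := by exact_mod_cast hn
  have hpi := pi_pos
  have hnv : n * v ≤ π := by rw [le_div_iff₀ (by positivity)] at h1; linarith
  have hvpi : v ≤ π := le_trans (by nlinarith) hnv
  have hs : 0 < sin (v / 2) := sin_pos_of_pos_of_lt_pi (by linarith) (by linarith)
  have hs' : sin (v / 2) ≤ v / 2 := sin_le (by linarith)
  have hj := mul_le_sin (x := n * v / 2) (by positivity) (by linarith)
  unfold sinRatio
  rw [le_div_iff₀ (by positivity)]
  calc 2 / π * (n * sin (v / 2)) ≤ 2 / π * (n * (v / 2)) := by gcongr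
    _ ≤ _ := by rw [← mul_div_assoc]; exact hj

theorem two_div_pi_pow_le_unitKernel {n : ℕ} (hn : 0 < n) (b : ℕ) {v : ℝ} (h0 : 0 ≤ v)
    (h1 : v ≤ π / n) : (2 / π) ^ (2 * b) ≤ unitKernel n b v := by
  have hn' : (0 : ℝ) < n := by exact_mod_cast hn
  have hpi := pi_pos
  have he : Even (2 * b) := even_two_mul b
  unfold unitKernel
  rcases h0.eq_or_lt with rfl | h0
  · have := two_div_pi_le_sinRatio hn (v := π / n) (by positivity) le_rfl
    rw [zero_sub, sinRatio_neg]
    have h2 := pow_le_pow_left₀ (by positivity) this (2 * b)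
    linarith [he.pow_nonneg (sinRatio n 0)]
  · have h2 := pow_le_pow_left₀ (by positivity) (two_div_pi_le_sinRatio hn h0 h1) (2 * b)
    linarith [he.pow_nonneg (sinRatio n (v - π / n))]

/-- The bound `cot x ≤ 1 / x` at the angle `x = 9h/2`. -/
theorem cos_div_sin_le_two_div {h : ℝ} (h0 : 0 < h) (h1 : 9 * h < π) :
    cos (9 * h / 2) / sin (9 * h / 2) ≤ 2 / (9 * h) := by
  have hs : 0 < sin (9 * h / 2) := sin_pos_of_pos_of_lt_pi (by linarith) (by linarith)
  have hc : 0 < cos (9 * h / 2) := cos_pos_of_mem_Ioo ⟨by linarith, by linarith⟩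
  have ht := le_tan (x := 9 * h / 2) (by linarith) (by linarith)
  rw [tan_eq_sin_div_cos, le_div_iff₀ hc] at ht
  rw [div_le_div_iff₀ hs (by positivity)]
  linarith

theorem factor_nonneg {h c v : ℝ} (h1 : 9 * h < π)
    (hc : |c| ≤ cos (9 * h / 2) / sin (9 * h / 2)) (hv : |v| ≤ 9 * h) :
    0 ≤ cos (v / 2) + c * sin (v / 2) := by
  rcases (abs_nonneg v |>.trans hv).eq_or_lt with hz | hpos
  · have : v = 0 := by rw [← hz] at hv; exact abs_nonpos_iff.mp hv
    simp [this]
  have hs : 0 < sin (9 * h / 2) := sin_pos_of_pos_of_lt_pi (by linarith) (by linarith)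
  have ha : |sin (v / 2)| = sin (|v| / 2) := by
    rw [abs_sin_eq_sin_abs_of_abs_le_pi, abs_div, abs_two]
    rw [abs_div, abs_two]; linarith [abs_nonneg v]
  have hb : cos (v / 2) = cos (|v| / 2) := by
    rw [← cos_abs (v / 2), abs_div, abs_two]
  have hsn : 0 ≤ sin (|v| / 2) :=
    sin_nonneg_of_nonneg_of_le_pi (by positivity) (by linarith [abs_nonneg v])
  have hp : |c * sin (v / 2)| ≤ cos (9 * h / 2) / sin (9 * h / 2) * sin (|v| / 2) := by
    rw [abs_mul, ha]; gcongr
  have hd : 0 ≤ sin (9 * h / 2 - |v| / 2) :=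
    sin_nonneg_of_nonneg_of_le_pi (by linarith) (by linarith [abs_nonneg v])
  rw [sin_sub] at hd
  have hq : cos (9 * h / 2) / sin (9 * h / 2) * sin (|v| / 2) ≤ cos (|v| / 2) := by
    rw [div_mul_eq_mul_div, div_le_iff₀ hs]; linarith
  rw [hb]
  linarith [neg_abs_le (c * sin (v / 2))]

theorem seven_eighths_le_factor {h c v : ℝ} (h0 : 0 < h) (h1 : 9 * h < π) (h2 : h ≤ 1 / 3)
    (hc : |c| ≤ cos (9 * h / 2) / sin (9 * h / 2)) (hv : |v| ≤ h) :
    7 / 8 ≤ cos (v / 2) + c * sin (v / 2) := by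
  have hcos := one_sub_sq_div_two_le_cos (x := v / 2)
  have hsin : |sin (v / 2)| ≤ h / 2 := by
    refine (abs_sin_le_abs).trans ?_
    rw [abs_div, abs_two]; linarith
  have hp : |c * sin (v / 2)| ≤ 2 / (9 * h) * (h / 2) := by
    rw [abs_mul]
    exact mul_le_mul (hc.trans (cos_div_sin_le_two_div h0 h1)) hsin (abs_nonneg _) (by positivity)
  have hq : 2 / (9 * h) * (h / 2) = 1 / 9 := by field_simp
  have hsq : v ^ 2 ≤ 1 / 9 := by
    rw [← sq_abs]
    nlinarith [abs_nonneg v]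
  rw [hq] at hp
  linarith [neg_abs_le (c * sin (v / 2))]

/-- Pointwise decay of the kernel times a sine product away from its centre. -/
theorem abs_unitKernel_mul_prod_le {n s b : ℕ} (hn : 19 ≤ n) (hb : s + 2 ≤ b) {c : ℕ → ℝ}
    (hc : ∀ i, |c i| ≤ cos (9 * (π / n) / 2) / sin (9 * (π / n) / 2)) {v : ℝ}
    (hv1 : 9 * (π / n) ≤ |v|) (hv2 : |v| ≤ π) :
    |unitKernel n b v * ∏ i ∈ Finset.range (2 * s), (cos (v / 2) + c i * sin (v / 2))| ≤
      2 * (8 / 7 * (π / n / |v|)) ^ 4 * (1 / 4) ^ (2 * b - 4) := by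
  have hpi := pi_gt_three
  have hpi4 := pi_lt_four
  have hnR : (19 : ℝ) ≤ n := by exact_mod_cast hn
  have hn0 : (0 : ℝ) < n := by linarith
  set h := π / n with hh
  have h0 : 0 < h := by positivity
  have hnh : n * h = π := by rw [hh]; field_simp
  have h19 : 19 * h ≤ π := by nlinarith
  set C := cos (9 * h / 2) / sin (9 * h / 2) with hC
  have hs9 : 0 < sin (9 * h / 2) := sin_pos_of_pos_of_lt_pi (by linarith) (by linarith)
  have hC0 : 0 ≤ C := (abs_nonneg _).trans (hc 0)
  have hC1 : C ≤ 2 / (9 * h) := cos_div_sin_le_two_div h0 (by linarith)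
  have hv0 : 0 < |v| := by linarith
  set σ := |sin (v / 2)| with hσ
  have hσe : σ = sin (|v| / 2) := by
    rw [hσ, abs_sin_eq_sin_abs_of_abs_le_pi, abs_div, abs_two]
    rw [abs_div, abs_two]; linarith
  have hσ1 : |v| / π ≤ σ := by
    have := mul_le_sin (x := |v| / 2) (by positivity) (by linarith)
    rw [hσe]; refine le_trans (le_of_eq ?_) this; field_simp
  have hσ0 : 0 < σ := lt_of_lt_of_le (by positivity) hσ1
  have hcosv : |cos (v / 2)| ≤ C * σ := by
    have hb : cos (v / 2) = cos (|v| / 2) := by rw [← cos_abs (v / 2), abs_div, abs_two]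
    have hcn : 0 ≤ cos (|v| / 2) := cos_nonneg_of_mem_Icc ⟨by linarith, by linarith⟩
    rw [hb, abs_of_nonneg hcn, hσe]
    have hd : 0 ≤ sin (|v| / 2 - 9 * h / 2) :=
      sin_nonneg_of_nonneg_of_le_pi (by linarith) (by linarith)
    rw [sin_sub] at hd
    rw [hC, div_mul_eq_mul_div, le_div_iff₀ hs9]; linarith
  set r := 8 / 7 * (1 / (n * σ)) with hr
  have hr0 : 0 < r := by positivity
  have hq : 1 / (n * σ) ≤ h / |v| := by
    rw [div_le_div_iff₀ (by positivity) hv0]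
    have : |v| ≤ π * σ := by rw [div_le_iff₀ (by positivity)] at hσ1; linarith
    nlinarith
  have hrv : r ≤ 8 / 7 * (h / |v|) := by rw [hr]; gcongr
  have hhv : h / |v| ≤ 1 / 9 := by
    rw [div_le_div_iff₀ hv0 (by norm_num)]; linarith
  have hr4 : r ≤ 1 / 4 := by linarith
  have hS1 : |sinRatio n v| ≤ r := by
    unfold sinRatio
    rw [abs_div, abs_mul, Nat.abs_cast, ← hσ, hr]
    have : |sin (n * v / 2)| / (n * σ) ≤ 1 / (n * σ) := by
      gcongr; exact abs_sin_le_one _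
    have h' : 0 < 1 / (n * σ) := by positivity
    linarith
  have hsh : 7 / 8 * σ ≤ |sin ((v - h) / 2)| := by
    have e : sin ((v - h) / 2) = sin (v / 2) * cos (h / 2) - cos (v / 2) * sin (h / 2) := by
      rw [← sin_sub]; ring_nf
    have hk := seven_eighths_le_factor (c := -C) (v := h) h0 (by linarith) (by linarith)
      (by rw [abs_neg, abs_of_nonneg hC0]) (abs_of_pos h0).le
    have hsh0 : 0 ≤ sin (h / 2) := sin_nonneg_of_nonneg_of_le_pi (by linarith) (by linarith)
    have hch0 : 0 ≤ cos (h / 2) := cos_nonneg_of_mem_Icc ⟨by linarith, by linarith⟩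
    have h3 := abs_sub_abs_le_abs_sub (sin (v / 2) * cos (h / 2)) (cos (v / 2) * sin (h / 2))
    rw [← e, abs_mul, abs_mul, abs_of_nonneg hsh0, abs_of_nonneg hch0, ← hσ] at h3
    have h4 : |cos (v / 2)| * sin (h / 2) ≤ C * σ * sin (h / 2) := by gcongr
    nlinarith
  have hS2 : |sinRatio n (v - h)| ≤ r := by
    unfold sinRatio
    rw [abs_div, abs_mul, Nat.abs_cast, hr]
    calc |sin (n * (v - h) / 2)| / (n * |sin ((v - h) / 2)|)
        ≤ 1 / (n * (7 / 8 * σ)) := by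
          gcongr; exact abs_sin_le_one _
      _ = _ := by field_simp
  have hK : unitKernel n b v ≤ 2 * r ^ (2 * b) := by
    unfold unitKernel
    rw [← (even_two_mul b).pow_abs, ← (even_two_mul b).pow_abs (sinRatio n (v - π / n))]
    have e1 := pow_le_pow_left₀ (abs_nonneg _) hS1 (2 * b)
    have e2 := pow_le_pow_left₀ (abs_nonneg _) hS2 (2 * b)
    linarith
  have hfac : r * (1 + C * σ) ≤ 1 / 4 := by
    have e1 : r * (1 + C * σ) = 8 / 7 * (1 / (n * σ) + C / n) := by rw [hr]; field_simp
    have e2 : C / n ≤ 2 / (9 * 3) := by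
      rw [div_le_iff₀ hn0]
      refine hC1.trans ?_
      rw [div_mul_eq_mul_div, div_le_div_iff₀ (by positivity) (by norm_num)]
      nlinarith
    rw [e1]
    linarith
  have hg : |∏ i ∈ Finset.range (2 * s), (cos (v / 2) + c i * sin (v / 2))| ≤
      (1 + C * σ) ^ (2 * s) := by
    rw [Finset.abs_prod]
    calc _ ≤ ∏ _i ∈ Finset.range (2 * s), (1 + C * σ) := by
          refine Finset.prod_le_prod (fun _ _ => abs_nonneg _) fun i _ => ?_
          refine (abs_add_le _ _).trans ?_
          rw [abs_mul]
          exact add_le_add (abs_cos_le_one _) (mul_le_mul_of_nonneg_right (hc i) hσ0.le)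
      _ = _ := by simp
  rw [abs_mul, abs_of_nonneg (unitKernel_nonneg n b v)]
  calc _ ≤ 2 * r ^ (2 * b) * (1 + C * σ) ^ (2 * s) := by gcongr
    _ = 2 * r ^ 4 * (r ^ (2 * b - 4 - 2 * s) * (r * (1 + C * σ)) ^ (2 * s)) := by
      have hpow : r ^ (2 * b) = r ^ 4 * r ^ (2 * b - 4 - 2 * s) * r ^ (2 * s) := by
        rw [← pow_add, ← pow_add]; congr 1; omega
      rw [hpow, mul_pow r (1 + C * σ)]
      clear_value r
      ring
    _ ≤ 2 * (8 / 7 * (h / |v|)) ^ 4 *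
        ((1 / 4) ^ (2 * b - 4 - 2 * s) * (1 / 4) ^ (2 * s)) := by gcongr
    _ = _ := by
      rw [← pow_add]; congr 2; omega

theorem integral_inv_cube {p q : ℝ} (hp : 0 < p) (hpq : p ≤ q) :
    ∫ v in p..q, 1 / v ^ 3 ≤ 1 / (2 * p ^ 2) := by
  have h := integral_zpow (a := p) (b := q) (n := -3)
    (Or.inr ⟨by norm_num, by rw [uIcc_of_le hpq]; exact fun hx => absurd hx.1 (by linarith)⟩)
  have e : ∀ v : ℝ, 1 / v ^ 3 = v ^ (-3 : ℤ) := fun v => by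
    rw [zpow_neg, one_div]; norm_cast
  simp only [e]
  rw [h]
  have hq : 0 < q := hp.trans_le hpq
  have e2 : ∀ v : ℝ, v ^ (-3 + 1 : ℤ) = 1 / v ^ 2 := fun v => by
    rw [show (-3 + 1 : ℤ) = -2 by norm_num, zpow_neg, one_div]; norm_cast
  rw [e2, e2]
  have : 0 < 1 / q ^ 2 := by positivity
  have e3 : 1 / (2 * p ^ 2) = (1 / p ^ 2) / 2 := by field_simp
  rw [e3]
  rw [show ((-3 : ℤ) : ℝ) + 1 = -2 by norm_num]
  linarith

/-- A weight that is positive near the centre and of linear growth has positive integral against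
the kernel times a sine product whose zeros keep distance `9h` from the centre. -/
theorem integral_weight_mul_unitKernel_pos {n s b : ℕ} (hn : 19 ≤ n) (hb : s + 2 ≤ b) {c : ℕ → ℝ}
    (hc : ∀ i, |c i| ≤ cos (9 * (π / n) / 2) / sin (9 * (π / n) / 2)) {ε : ℝ} (hε : |ε| ≤ 1) :
    0 < ∫ v in (-π)..π, (10 * (π / n) + ε * v) *
      (unitKernel n b v * ∏ i ∈ Finset.range (2 * s), (cos (v / 2) + c i * sin (v / 2))) := by
  have hpi := pi_gt_three
  have hpi4 := pi_lt_four
  have hnR : (19 : ℝ) ≤ n := by exact_mod_cast hn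
  have hn0 : (0 : ℝ) < n := by linarith
  have htail := fun v => abs_unitKernel_mul_prod_le (v := v) hn hb hc
  have hcen := fun v => two_div_pi_pow_le_unitKernel (n := n) (v := v) (by omega) b
  set h := π / n with hh
  have h0 : 0 < h := by positivity
  have hnh : n * h = π := by rw [hh]; field_simp
  have h19 : 19 * h ≤ π := by nlinarith
  set g : ℝ → ℝ := fun v => ∏ i ∈ Finset.range (2 * s), (cos (v / 2) + c i * sin (v / 2)) with hg
  have hgc : Continuous g := by
    rw [hg]; fun_prop
  set P : ℝ → ℝ := fun v => (10 * h + ε * v) * (unitKernel n b v * g v) with hP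
  have hi : ∀ p q, IntervalIntegrable P volume p q := fun p q =>
    ((intervalIntegrable_unitKernel n b p q).mul_continuousOn hgc.continuousOn).continuousOn_mul
      (by fun_prop)
  have hεv : ∀ v, |ε * v| ≤ |v| := fun v => by
    rw [abs_mul]; exact mul_le_of_le_one_left (abs_nonneg _) hε
  set T := 8 * h ^ 4 * (1 / 4) ^ (2 * b - 4) with hT
  have hT0 : 0 ≤ T := by positivity
  have htl : ∀ v, 9 * h ≤ |v| → |v| ≤ π → |P v| ≤ T * (1 / |v| ^ 3) := by
    intro v h1 h2
    have hv0 : 0 < |v| := by linarith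
    have hw : |10 * h + ε * v| ≤ 19 / 9 * |v| := by
      refine (abs_add_le _ _).trans ?_
      rw [abs_of_pos (by positivity : 0 < 10 * h)]
      linarith [hεv v]
    calc |P v| = |10 * h + ε * v| * |unitKernel n b v * g v| := abs_mul _ _
      _ ≤ (19 / 9 * |v|) * (2 * (8 / 7 * (h / |v|)) ^ 4 * (1 / 4) ^ (2 * b - 4)) := by
        gcongr
        exact htail v h1 h2
      _ = (19 / 9 * 2 * (8 / 7) ^ 4) * (h ^ 4 * (1 / 4) ^ (2 * b - 4) * (1 / |v| ^ 3)) := by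
        field_simp
      _ ≤ 8 * (h ^ 4 * (1 / 4) ^ (2 * b - 4) * (1 / |v| ^ 3)) := by
        gcongr; norm_num
      _ = _ := by rw [hT]; ring
  have hcontT : ContinuousOn (fun v : ℝ => -(T * (1 / v ^ 3))) (uIcc (9 * h) π) := by
    rw [uIcc_of_le (by linarith)]
    refine (ContinuousOn.mul continuousOn_const ?_).neg
    refine ContinuousOn.div continuousOn_const (by fun_prop) fun v hv => ?_
    have : 0 < v := by linarith [hv.1]
    positivity
  have hTint : -(T * (1 / (2 * (9 * h) ^ 2))) ≤ ∫ v in (9 * h)..π, -(T * (1 / v ^ 3)) := by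
    rw [intervalIntegral.integral_neg, intervalIntegral.integral_const_mul]
    exact neg_le_neg (mul_le_mul_of_nonneg_left
      (integral_inv_cube (by positivity) (by linarith)) hT0)
  have hright : -(T * (1 / (2 * (9 * h) ^ 2))) ≤ ∫ v in (9 * h)..π, P v := by
    refine hTint.trans (intervalIntegral.integral_mono_on (by linarith)
      hcontT.intervalIntegrable (hi _ _) fun v hv => ?_)
    have hv0 : 0 < v := by linarith [hv.1]
    have := htl v (by rw [abs_of_pos hv0]; exact hv.1) (by rw [abs_of_pos hv0]; exact hv.2)
    rw [abs_of_pos hv0] at this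
    exact (abs_le.mp this).1
  have hleft : -(T * (1 / (2 * (9 * h) ^ 2))) ≤ ∫ v in (-π)..(-(9 * h)), P v := by
    rw [← intervalIntegral.integral_comp_neg]
    have hin : IntervalIntegrable (fun v => P (-v)) volume (9 * h) π := by
      have := (IntervalIntegrable.iff_comp_neg (by finiteness)).mp (hi (-(9 * h)) (-π))
      simpa using this
    refine hTint.trans (intervalIntegral.integral_mono_on (by linarith)
      hcontT.intervalIntegrable hin fun v hv => ?_)
    have hv0 : 0 < v := by linarith [hv.1]
    have := htl (-v) (by rw [abs_neg, abs_of_pos hv0]; exact hv.1)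
      (by rw [abs_neg, abs_of_pos hv0]; exact hv.2)
    rw [abs_neg, abs_of_pos hv0] at this
    exact (abs_le.mp this).1
  have hnonneg : ∀ v, |v| ≤ 9 * h → 0 ≤ P v := by
    intro v hv
    have h1 : 0 ≤ 10 * h + ε * v := by linarith [hεv v, neg_abs_le (ε * v)]
    refine mul_nonneg h1 (mul_nonneg (unitKernel_nonneg n b v) ?_)
    exact Finset.prod_nonneg fun i _ => factor_nonneg (by linarith) (hc i) hv
  have hm1 : 0 ≤ ∫ v in (-(9 * h))..0, P v :=
    intervalIntegral.integral_nonneg (by linarith) fun v hv =>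
      hnonneg v (abs_le.mpr ⟨hv.1, by linarith [hv.2]⟩)
  have hm2 : 0 ≤ ∫ v in h..(9 * h), P v :=
    intervalIntegral.integral_nonneg (by linarith) fun v hv =>
      hnonneg v (abs_le.mpr ⟨by linarith [hv.1], hv.2⟩)
  have hm3 : h * (9 * h * (1 / 2) ^ (2 * b)) ≤ ∫ v in (0)..h, P v := by
    have e : ∫ _v in (0)..h, 9 * h * (1 / 2 : ℝ) ^ (2 * b) = h * (9 * h * (1 / 2) ^ (2 * b)) := by
      simp; ring
    rw [← e]
    refine intervalIntegral.integral_mono_on h0.le (by simp) (hi _ _) fun v hv => ?_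
    have hva : |v| ≤ h := by rw [abs_of_nonneg hv.1]; exact hv.2
    have h1 : 9 * h ≤ 10 * h + ε * v := by linarith [hεv v, neg_abs_le (ε * v)]
    have h2 : (7 / 8 : ℝ) ^ (2 * b) ≤ g v := by
      calc (7 / 8 : ℝ) ^ (2 * b) ≤ (7 / 8) ^ (2 * s) :=
            pow_le_pow_of_le_one (by norm_num) (by norm_num) (by omega)
        _ = ∏ _i ∈ Finset.range (2 * s), (7 / 8 : ℝ) := by
          rw [Finset.prod_const, Finset.card_range]
        _ ≤ _ := Finset.prod_le_prod (fun _ _ => by norm_num) fun i _ =>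
            seven_eighths_le_factor h0 (by linarith) (by linarith) (hc i) hva
    have h3 := hcen v hv.1 hv.2
    have h4 : (1 / 2 : ℝ) ≤ 2 / π * (7 / 8) := by
      rw [div_mul_eq_mul_div, le_div_iff₀ (by positivity)]
      linarith [pi_lt_d2]
    have h5 : (1 / 2 : ℝ) ^ (2 * b) ≤ unitKernel n b v * g v := by
      calc (1 / 2 : ℝ) ^ (2 * b) ≤ (2 / π * (7 / 8)) ^ (2 * b) := by gcongr
        _ = (2 / π) ^ (2 * b) * (7 / 8) ^ (2 * b) := mul_pow _ _ _
        _ ≤ _ := by gcongr; exact unitKernel_nonneg n b v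
    exact mul_le_mul h1 h5 (by positivity) (by linarith)
  have hsum : ∫ v in (-π)..π, P v = (∫ v in (-π)..(-(9 * h)), P v) + (∫ v in (-(9 * h))..0, P v)
      + (∫ v in (0)..h, P v) + (∫ v in h..(9 * h), P v) + ∫ v in (9 * h)..π, P v := by
    rw [intervalIntegral.integral_add_adjacent_intervals (hi _ _) (hi _ _),
      intervalIntegral.integral_add_adjacent_intervals (hi _ _) (hi _ _),
      intervalIntegral.integral_add_adjacent_intervals (hi _ _) (hi _ _),
      intervalIntegral.integral_add_adjacent_intervals (hi _ _) (hi _ _)]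
  have hcmp : 2 * (T * (1 / (2 * (9 * h) ^ 2))) < h * (9 * h * (1 / 2) ^ (2 * b)) := by
    obtain ⟨k, rfl⟩ := Nat.exists_eq_add_of_le (show 2 ≤ b by omega)
    have e1 : 2 * (T * (1 / (2 * (9 * h) ^ 2))) = 8 / 81 * h ^ 2 * (1 / 4) ^ (2 * k) := by
      rw [hT, show 2 * (2 + k) - 4 = 2 * k by omega]
      field_simp
      ring
    have e2 : h * (9 * h * (1 / 2) ^ (2 * (2 + k))) = 9 / 16 * h ^ 2 * (1 / 2) ^ (2 * k) := by
      rw [show 2 * (2 + k) = 4 + 2 * k by ring, pow_add]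
      ring
    rw [e1, e2]
    have e3 : (1 / 4 : ℝ) ^ (2 * k) ≤ (1 / 2) ^ (2 * k) := by gcongr; norm_num
    have e4 : (0 : ℝ) < (1 / 2) ^ (2 * k) := by positivity
    calc _ ≤ 8 / 81 * h ^ 2 * (1 / 2) ^ (2 * k) := by gcongr
      _ < _ := mul_lt_mul_of_pos_right
        (mul_lt_mul_of_pos_right (by norm_num) (by positivity)) e4
  rw [hsum]
  linarith

theorem sin_half_le_abs_sin_half {δ d : ℝ} (hδ : 0 ≤ δ) (hd : ∀ m : ℤ, δ ≤ |d + 2 * π * m|) :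
    δ ≤ π ∧ sin (δ / 2) ≤ |sin (d / 2)| := by
  have hpi := pi_pos
  set q := toIcoDiv two_pi_pos 0 d
  set e := toIcoMod two_pi_pos 0 d with he
  have hmem : e ∈ Ico (0 : ℝ) (0 + 2 * π) := toIcoMod_mem_Ico two_pi_pos 0 d
  have heq : e + q * (2 * π) = d := by
    have := toIcoMod_add_toIcoDiv_zsmul two_pi_pos 0 d
    rwa [zsmul_eq_mul] at this
  have h1 : δ ≤ e := by
    have := hd (-q)
    rwa [show d + 2 * π * ((-q : ℤ) : ℝ) = e by rw [← heq]; push_cast; ring,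
      abs_of_nonneg hmem.1] at this
  have h2 : δ ≤ 2 * π - e := by
    have := hd (-q - 1)
    rwa [show d + 2 * π * ((-q - 1 : ℤ) : ℝ) = -(2 * π - e) by rw [← heq]; push_cast; ring,
      abs_neg, abs_of_nonneg (by linarith [hmem.2])] at this
  refine ⟨by linarith, ?_⟩
  have h3 : |sin (d / 2)| = |sin (e / 2)| := by
    rw [show d / 2 = e / 2 + q * π by rw [← heq]; ring, sin_add_int_mul_pi, abs_mul]
    simp
  rw [h3]
  refine le_trans ?_ (le_abs_self _)
  rcases le_total e π with h | h
  · exact sin_le_sin_of_le_of_le_pi_div_two (by linarith) (by linarith) (by linarith)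
  · rw [← sin_pi_sub (e / 2)]
    exact sin_le_sin_of_le_of_le_pi_div_two (by linarith) (by linarith) (by linarith)

theorem abs_cos_div_sin_le {p q : ℝ} (hp : 0 < sin p) (hc : 0 ≤ cos p) (h : sin p ≤ |sin q|) :
    |cos q / sin q| ≤ cos p / sin p := by
  rw [abs_div]
  have hsq : |cos q| ≤ cos p := by
    rw [← abs_of_nonneg hc]
    refine sq_le_sq.mp ?_
    have h1 : sin p ^ 2 ≤ sin q ^ 2 := by rw [← sq_abs (sin q)]; gcongr
    linarith [sin_sq_add_cos_sq p, sin_sq_add_cos_sq q]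
  gcongr

theorem apply_add_mul_period {s : ℕ} {y : ℤ → ℝ}
    (hper : ∀ i : ℤ, y (i + 2 * (s : ℤ)) = y i - 2 * π) (i m : ℤ) :
    y (i + 2 * s * m) = y i - 2 * π * m := by
  induction m using Int.induction_on with
  | zero => simp
  | succ k ih =>
    rw [show i + 2 * (s : ℤ) * (k + 1) = i + 2 * s * k + 2 * s by ring, hper, ih]
    push_cast; ring
  | pred k ih =>
    have := hper (i + 2 * (s : ℤ) * (-k - 1))
    rw [show i + 2 * (s : ℤ) * (-k - 1) + 2 * s = i + 2 * s * -k by ring, ih] at this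
    push_cast at this ⊢
    linarith

theorem xnode_add (n : ℕ) (j m : ℤ) : xnode n (j + m) = xnode n j - m * (π / n) := by
  unfold xnode; push_cast; ring

theorem xnode_sub (n : ℕ) (j m : ℤ) : xnode n (j - m) = xnode n j + m * (π / n) := by
  unfold xnode; push_cast; ring

theorem le_abs_xnode_sub_of_memH {y : ℤ → ℝ} {n : ℕ} (hn : 0 < n) {j : ℤ}
    (hj : memH y n 20 j) (i : ℤ) : 19 * (π / n) ≤ |xnode n j - y i| := by
  have hn' : (0 : ℝ) < n := by exact_mod_cast hn
  have hpi := pi_pos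
  have hh : 0 < π / n := by positivity
  have hi : ¬(xnode n (jIdx y n i + 20 + 1) < xnode n j ∧
      xnode n j < xnode n (jIdx y n i - 20)) := fun hx =>
    hj (mem_iUnion.mpr ⟨i, by simpa [Oint] using hx⟩)
  set J := jIdx y n i with hJ
  have hJ1 : -(y i) ≤ J * (π / n) := by
    have := Int.le_ceil (-(y i) * n / π)
    rw [div_le_iff₀ hpi] at this
    rw [← mul_div_assoc, le_div_iff₀ hn']
    exact this
  have hJ2 : (J - 1) * (π / n) < -(y i) := by
    have := Int.ceil_lt_add_one (-(y i) * n / π)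
    rw [← sub_lt_iff_lt_add, lt_div_iff₀ hpi] at this
    rw [← mul_div_assoc, div_lt_iff₀ hn']
    exact this
  have hxn : xnode n j = -j * (π / n) := rfl
  rcases le_or_gt j (J - 20) with h | h
  · have hc : (j : ℝ) ≤ J - 20 := by exact_mod_cast h
    have := mul_le_mul_of_nonneg_right hc hh.le
    refine le_trans ?_ (le_abs_self _)
    rw [hxn]; linarith
  · rcases le_or_gt (J + 21) j with h' | h'
    · have hc : (J : ℝ) + 21 ≤ j := by exact_mod_cast h'
      have := mul_le_mul_of_nonneg_right hc hh.le
      refine le_trans ?_ (neg_le_abs _)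
      rw [hxn]; linarith
    · exfalso
      refine hi ⟨?_, ?_⟩
      · have hc : (j : ℝ) < J + 20 + 1 := by exact_mod_cast (by linarith : j < J + 20 + 1)
        have := mul_lt_mul_of_pos_right hc hh
        unfold xnode; push_cast; linarith
      · have hc : (J : ℝ) - 20 < j := by exact_mod_cast h
        have := mul_lt_mul_of_pos_right hc hh
        unfold xnode; push_cast; linarith

theorem Jker_eq {n : ℕ} (hn : 0 < n) (b : ℕ) (k : ℤ) (u : ℝ) :
    Jker n b k u = (n : ℝ) ^ (2 * b) * unitKernel n b (u - xnode n k) := by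
  have hn' : (n : ℝ) ≠ 0 := by exact_mod_cast hn.ne'
  have key (v : ℝ) : sin (n * v / 2) / sin (v / 2) = n * sinRatio n v := by
    unfold sinRatio
    rw [← mul_div_assoc, mul_div_mul_left _ _ hn']
  have hs : xnode n (k - 1) = xnode n k + π / n := by
    simpa using xnode_sub n k 1
  unfold Jker unitKernel
  rw [key, key, mul_pow, mul_pow, hs, sub_add_eq_sub_sub, mul_add]

theorem sinRatio_pow_periodic (n b : ℕ) (v : ℝ) :
    sinRatio n (v + 2 * π) ^ (2 * b) = sinRatio n v ^ (2 * b) := by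
  rw [← (even_two_mul b).pow_abs, ← (even_two_mul b).pow_abs (sinRatio n v)]
  congr 1
  unfold sinRatio
  rw [show n * (v + 2 * π) / 2 = n * v / 2 + n * π by ring,
    show (v + 2 * π) / 2 = v / 2 + π by ring, sin_add_nat_mul_pi, sin_add_pi]
  simp [abs_div, abs_mul]

theorem unitKernel_periodic (n b : ℕ) : Function.Periodic (unitKernel n b) (2 * π) := by
  intro v
  unfold unitKernel
  rw [show v + 2 * π - π / n = v - π / n + 2 * π by ring, sinRatio_pow_periodic,
    sinRatio_pow_periodic]

theorem trigPi_periodic (s : ℕ) (y : ℤ → ℝ) : Function.Periodic (trigPi s y) (2 * π) := by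
  intro x
  unfold trigPi
  have h (i : ℕ) : sin ((x + 2 * π - y ((i : ℤ) + 1)) / 2) =
      -sin ((x - y ((i : ℤ) + 1)) / 2) := by
    rw [← sin_add_pi]; ring_nf
  simp only [h]
  rw [Finset.prod_neg]
  simp

theorem continuous_trigPi (s : ℕ) (y : ℤ → ℝ) : Continuous (trigPi s y) := by
  unfold trigPi; fun_prop

theorem trigPi_add {s : ℕ} {y : ℤ → ℝ} {x : ℝ} (hx : ∀ i, sin ((x - y i) / 2) ≠ 0) (v : ℝ) :
    trigPi s y (x + v) = trigPi s y x * ∏ i ∈ Finset.range (2 * s),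
      (cos (v / 2) + cos ((x - y ((i : ℤ) + 1)) / 2) / sin ((x - y ((i : ℤ) + 1)) / 2)
        * sin (v / 2)) := by
  unfold trigPi
  rw [← Finset.prod_mul_distrib]
  refine Finset.prod_congr rfl fun i _ => ?_
  have := hx ((i : ℤ) + 1)
  rw [show (x + v - y ((i : ℤ) + 1)) / 2 = (x - y ((i : ℤ) + 1)) / 2 + v / 2 by ring, sin_add]
  field_simp

theorem countable_sin_half_eq_zero (a : ℝ) : {u : ℝ | sin ((u - a) / 2) = 0}.Countable := by
  refine (countable_range fun m : ℤ => 2 * (m * π) + a).mono fun u hu => ?_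
  obtain ⟨m, hm⟩ := sin_eq_zero_iff.mp hu
  exact ⟨m, by simp only [hm]; ring⟩

theorem continuousAt_sinRatio {n : ℕ} (hn : 0 < n) {v : ℝ} (hv : sin (v / 2) ≠ 0) :
    ContinuousAt (sinRatio n) v := by
  have hn' : (n : ℝ) ≠ 0 := by exact_mod_cast hn.ne'
  unfold sinRatio
  exact ContinuousAt.div (by fun_prop) (by fun_prop) (mul_ne_zero hn' hv)

/-- The mean of `t_k` over a period is a `10h`-perturbation of that of a step at `x_k`. -/
theorem abs_integral_tfun_sub_le {s : ℕ} {y : ℤ → ℝ} {n b : ℕ} {k : ℤ} (hn : 19 ≤ n)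
    (hb : s + 2 ≤ b)
    (hk : ∀ i, sin (9 * (π / n) / 2) ≤ |sin ((xnode n k - y i) / 2)|) (a : ℝ) :
    |(∫ u in (a - π)..(a + π), tfun s y n b k u) - (π + a - xnode n k)| ≤ 10 * (π / n) := by
  have hpi := pi_pos
  have hn0 : 0 < n := by omega
  have hnR : (19 : ℝ) ≤ n := by exact_mod_cast hn
  have hh : 0 < π / n := by positivity
  have h19 : 19 * (π / n) ≤ π := by
    rw [← mul_div_assoc, div_le_iff₀ (by linarith)]; nlinarith
  have hs9 : 0 < sin (9 * (π / n) / 2) := sin_pos_of_pos_of_lt_pi (by linarith) (by linarith)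
  have hc9 : 0 ≤ cos (9 * (π / n) / 2) := cos_nonneg_of_mem_Icc ⟨by linarith, by linarith⟩
  have hne : ∀ i, sin ((xnode n k - y i) / 2) ≠ 0 := fun i h0 => by
    have := hk i
    rw [h0, abs_zero] at this
    linarith
  set c : ℕ → ℝ := fun i => cos ((xnode n k - y ((i : ℤ) + 1)) / 2) /
    sin ((xnode n k - y ((i : ℤ) + 1)) / 2) with hcdef
  have hc : ∀ i, |c i| ≤ cos (9 * (π / n) / 2) / sin (9 * (π / n) / 2) :=
    fun i => abs_cos_div_sin_le hs9 hc9 (hk _)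
  have hpos := fun ε hε => integral_weight_mul_unitKernel_pos (ε := ε) hn hb hc hε
  set p : ℝ → ℝ := fun v =>
    unitKernel n b v * ∏ i ∈ Finset.range (2 * s), (cos (v / 2) + c i * sin (v / 2)) with hp
  set f : ℝ → ℝ := fun u => Jker n b k u * trigPi s y u with hf
  set κ := (n : ℝ) ^ (2 * b) * trigPi s y (xnode n k) with hκ
  have hκ0 : κ ≠ 0 := mul_ne_zero (by positivity) (Finset.prod_ne_zero_iff.mpr fun i _ => hne _)
  have hfJ : f = fun u => (n : ℝ) ^ (2 * b) * unitKernel n b (u - xnode n k) * trigPi s y u := by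
    funext u; rw [hf]; simp only [Jker_eq hn0]
  have hfv : ∀ v, f (xnode n k + v) = κ * p v := by
    intro v
    rw [hfJ]
    simp only [add_sub_cancel_left]
    rw [trigPi_add hne, hκ, hp]
    ring
  have hpi' : IntervalIntegrable p volume (-π) π :=
    (intervalIntegrable_unitKernel n b _ _).mul_continuousOn (by fun_prop)
  have hfm : Measurable f := by
    have h1 := measurable_unitKernel n b
    have h2 := (continuous_trigPi s y).measurable
    rw [hfJ]; fun_prop
  have hfp : Function.Periodic f (2 * π) := by
    intro u
    rw [hfJ]
    simp only [trigPi_periodic s y u,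
      show u + 2 * π - xnode n k = u - xnode n k + 2 * π by ring, unitKernel_periodic n b _]
  have hfi : ∀ p q, IntervalIntegrable f volume p q := by
    intro p q
    rw [hfJ]
    have h1 := (intervalIntegrable_unitKernel n b (p - xnode n k) (q - xnode n k)).comp_sub_right
      (xnode n k)
    simp only [sub_add_cancel] at h1
    exact (h1.const_mul _).mul_continuousOn (continuous_trigPi s y).continuousOn
  have hfc : ∀ u ∉ {u : ℝ | sin ((u - xnode n k) / 2) = 0} ∪
      {u : ℝ | sin ((u - (xnode n k + π / n)) / 2) = 0}, ContinuousAt f u := by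
    intro u hu
    simp only [mem_union, mem_ofPred_eq, not_or] at hu
    rw [hfJ]
    have hu2 : sin ((u - xnode n k - π / n) / 2) ≠ 0 := by
      rw [sub_sub]; exact hu.2
    have h1 : ContinuousAt (fun u => sinRatio n (u - xnode n k)) u :=
      ContinuousAt.comp (f := fun u => u - xnode n k) (continuousAt_sinRatio hn0 hu.1)
        (by fun_prop)
    have h2 : ContinuousAt (fun u => sinRatio n (u - xnode n k - π / n)) u :=
      ContinuousAt.comp (f := fun u => u - xnode n k - π / n) (continuousAt_sinRatio hn0 hu2)
        (by fun_prop)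
    unfold unitKernel
    exact (continuousAt_const.mul ((h1.pow _).add (h2.pow _))).mul
      (continuous_trigPi s y).continuousAt
  have hmain := integral_primitive_of_periodic hfm hfp hfi
    ((countable_sin_half_eq_zero _).union (countable_sin_half_eq_zero _)) hfc (xnode n k) a
  set d := ∫ v in (-π)..π, p v with hd
  set m := ∫ v in (-π)..π, v * p v with hm
  have hD : ∫ u in (xnode n k - π)..(xnode n k + π), f u = κ * d := by
    have := intervalIntegral.integral_comp_add_left (a := -π) (b := π) f (xnode n k)
    rw [sub_eq_add_neg, ← this]
    simp only [hfv]
    rw [intervalIntegral.integral_const_mul]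
  have hM : ∫ v in (-π)..π, v * f (xnode n k + v) = κ * m := by
    simp only [hfv]
    rw [← intervalIntegral.integral_const_mul]
    congr 1; funext v; ring
  have hweight : ∀ ε : ℝ, |ε| ≤ 1 → 0 < 10 * (π / n) * d + ε * m := by
    intro ε hε
    have h1 := hpos ε hε
    have h2 : ∫ v in (-π)..π, (10 * (π / n) + ε * v) * p v = 10 * (π / n) * d + ε * m := by
      rw [← intervalIntegral.integral_const_mul, ← intervalIntegral.integral_const_mul,
        ← intervalIntegral.integral_add (hpi'.const_mul _)
          ((hpi'.continuousOn_mul (by fun_prop)).const_mul _)]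
      congr 1; funext v; ring
    rwa [h2] at h1
  have hw1 := hweight 1 (by simp)
  have hw2 := hweight (-1) (by simp)
  have hd0 : 0 < d := by
    by_contra hcon
    nlinarith
  have hI : ∫ u in (a - π)..(a + π), tfun s y n b k u = (π + a - xnode n k) - m / d := by
    have e : ∀ u, tfun s y n b k u = (∫ w in (xnode n k - π)..u, f w) / (κ * d) := fun u => by
      rw [← hD]; rfl
    simp only [e]
    rw [intervalIntegral.integral_div, hmain, hD, hM]
    have := hd0.ne'
    field_simp
  rw [hI, sub_sub_cancel_left, abs_neg, abs_div, abs_of_pos hd0, div_le_iff₀ hd0, abs_le]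
  constructor <;> linarith

theorem stmt12_tau_normalization
    (s : ℕ) (hs : 0 < s) (y : ℤ → ℝ)
    (hper : ∀ i : ℤ, y (i + 2 * (s : ℤ)) = y i - 2 * Real.pi)
    (hmono : ∀ i : ℤ, 1 ≤ i → i < 2 * (s : ℤ) → y (i + 1) < y i)
    (hlow : -Real.pi ≤ y (2 * (s : ℤ))) (hhigh : y 1 < Real.pi)
    (N : ℕ) (hN : ∀ n : ℕ, N ≤ n → ∀ i : ℤ, 1 ≤ i → i ≤ 2 * (s : ℤ) →
      Oint y n 30 i ∩ Oint y n 30 (i - 1) = ∅)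
    (n : ℕ) (hn : N ≤ n) (hn0 : 0 < n)
    (b : ℕ) (hb : s + 2 ≤ b)
    (j : ℤ) (hj : memH y n 20 j) (hjn : |j| ≤ (n : ℤ)) :
    ∃ α : ℝ, 0 ≤ α ∧ α ≤ 1 ∧ taufun s y n b j α (xnode n j + Real.pi) = Real.pi := by

  have hpi := pi_pos
  have hh : 0 < π / n := by positivity
  have hdist := le_abs_xnode_sub_of_memH hn0 hj
  have hn19 : 19 ≤ n := by
    have h := (sin_half_le_abs_sin_half (δ := 19 * (π / n)) (d := xnode n j - y 0)
      (by positivity) fun m => by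
        have := hdist (0 + 2 * s * m)
        rwa [apply_add_mul_period hper, ← sub_add] at this).1
    rw [← mul_div_assoc, div_le_iff₀ (by exact_mod_cast hn0), mul_comm] at h
    exact_mod_cast le_of_mul_le_mul_left h hpi
  have hnear : ∀ k : ℤ, |xnode n k - xnode n j| ≤ 10 * (π / n) →
      ∀ i, sin (9 * (π / n) / 2) ≤ |sin ((xnode n k - y i) / 2)| := by
    intro k hk i
    refine (sin_half_le_abs_sin_half (by positivity) fun m => ?_).2
    have h1 := hdist (i + 2 * s * m)
    rw [apply_add_mul_period hper] at h1
    have h2 := abs_sub_abs_le_abs_sub (xnode n j - (y i - 2 * π * m)) (xnode n j - xnode n k)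
    rw [abs_sub_comm (xnode n j) (xnode n k)] at h2
    rw [show xnode n k - y i + 2 * π * m =
      xnode n j - (y i - 2 * π * m) - (xnode n j - xnode n k) by ring]
    linarith
  have hx1 : xnode n (j + 10) = xnode n j - 10 * (π / n) := by
    simpa using xnode_add n j 10
  have hx2 : xnode n (j - 10) = xnode n j + 10 * (π / n) := by
    simpa using xnode_sub n j 10
  have h1 := abs_integral_tfun_sub_le hn19 hb (hnear (j + 10) (by
    rw [hx1, sub_sub_cancel_left, abs_neg, abs_of_pos (by positivity)])) (xnode n j)
  have h2 := abs_integral_tfun_sub_le hn19 hb (hnear (j - 10) (by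
    rw [hx2, add_sub_cancel_left, abs_of_pos (by positivity)])) (xnode n j)
  rw [hx1] at h1
  rw [hx2] at h2
  unfold taufun
  set A := ∫ u in (xnode n j - π)..(xnode n j + π), tfun s y n b (j + 10) u
  set B := ∫ u in (xnode n j - π)..(xnode n j + π), tfun s y n b (j - 10) u
  have hA : π ≤ A := by linarith [(abs_le.mp h1).1]
  have hB : B ≤ π := by linarith [(abs_le.mp h2).2]
  rcases (hB.trans hA).eq_or_lt with hAB | hAB
  · exact ⟨0, le_rfl, zero_le_one, by linarith⟩
  · have hpos : 0 < A - B := by linarith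
    refine ⟨(π - B) / (A - B), div_nonneg (by linarith) hpos.le,
      (div_le_one hpos).mpr (by linarith), ?_⟩
    field_simp
    ring
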